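/- Let G be a finite group, C a conjugacy class of G, and η a finite-dimensional complex representation of G with character χ^η and dimension d_η. Define the function f_C on Irr(G) by f_C(ρ) = |C|^{1/2}·χ^ρ(C)/d_ρ, where χ^ρ(C) is the common value of the character of ρ on C. Let K be the tensor product Markov chain on Irr(G) associated to η, started at the trivial representation 𝟙. Then for all integers r ≥ 0 and s ≥ 0, Σ_{ρ∈Irr(G)} K^r(𝟙,ρ)·f_C(ρ)^s = |C|^{s/2} · |C|^{-s} · Σ_{(c_1,…,c_s)∈C^s} (χ^η(c_1⋯c_s)/d_η)^r; equivalently, E_{K^r}[(f_C)^s] = |C|^{s/2}·Σ_T p_{s,C}(T)·(χ^η(T)/d_η)^r, where the sum is over conjugacy classes T of G and p_{s,C}(T) is the probability that the product of s independent uniformly random elements of C lies in T. -/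

import Mathlib

open CategoryTheory MonoidalCategory Finset

noncomputable section

/-- The multiplicity of the irreducible representation `ρ` in a finite-dimensional
representation `W`: the dimension of the space of `G`-equivariant maps `ρ ⟶ W`
(by Schur's lemma this equals the multiplicity of `ρ` in a decomposition of `W`
into irreducibles). -/
def multIn {G : Type} [Monoid G] (ρ W : FDRep ℂ G) : ℕ :=
  Module.finrank ℂ (ρ ⟶ W)

/-- The transition matrix of the tensor product Markov chain on (an index set `ι` for)
the irreducible representations of `G` associated with a fixed representation `η`:
`K(λ,ρ) = m_ρ(λ⊗η)·d_ρ/(d_λ·d_η)`. -/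
def tensorChain {G : Type} [Monoid G] {ι : Type} (rep : ι → FDRep ℂ G) (η : FDRep ℂ G) :
    Matrix ι ι ℝ := fun l r =>
  (multIn (rep r) (MonoidalCategory.tensorObj (rep l) η) * Module.finrank ℂ (rep r) : ℝ) /
    (Module.finrank ℂ (rep l) * Module.finrank ℂ η)

/-- The Plancherel measure `π(ρ) = d_ρ²/|G|` on the irreducible representations of `G`. -/
def plancherel {G : Type} [Monoid G] [Fintype G] {ι : Type} (rep : ι → FDRep ℂ G) (i : ι) :
    ℝ :=
  (Module.finrank ℂ (rep i) : ℝ) ^ 2 / (Fintype.card G : ℝ)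

/-- The total variation distance between two probability distributions on a finite set:
`‖P − Q‖_TV = (1/2)·Σ_x |P x − Q x|`. -/
def tvDist {X : Type*} [Fintype X] (P Q : X → ℝ) : ℝ :=
  (1 / 2) * ∑ x, |P x - Q x|


/-- A finite-dimensional representation over `ℂ` that is irreducible in the unbundled sense is a
simple object. -/
theorem FDRep.simple_of_isIrreducible {G : Type} [Group G] [Finite G] (V : FDRep ℂ G)
    (h : Representation.IsIrreducible V.ρ) : Simple V := by
  have := Fintype.ofFinite G
  have hG : (Nat.card G : ℂ) ≠ 0 := Nat.cast_ne_zero.mpr Nat.card_pos.ne'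
  have := invertibleOfNonzero hG
  rw [FDRep.simple_iff_char_is_norm_one]
  have h1 := Representation.char_orthonormal V.ρ V.ρ
  rw [if_pos ⟨Representation.Equiv.refl V.ρ⟩, inv_mul_eq_one₀ hG] at h1
  exact h1.symm

/-- The character of a representation is the sum of the characters of two complementary
subrepresentations. -/
theorem FDRep.character_eq_add_of_isCompl {G : Type} [Group G] (V : FDRep ℂ G)
    (p q : Subrepresentation V.ρ) (h : IsCompl p q) :
    V.character = (FDRep.of p.toRepresentation).character +
      (FDRep.of q.toRepresentation).character := by
  have hc : IsCompl p.toSubmodule q.toSubmodule := by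
    constructor
    · rw [disjoint_iff, ← Subrepresentation.toSubmodule_inf, h.inf_eq_bot]; rfl
    · rw [codisjoint_iff, ← Subrepresentation.toSubmodule_sup, h.sup_eq_top]; rfl
  ext g
  let e := Submodule.prodEquivOfIsCompl _ _ hc
  have key : V.ρ g = e.conj ((p.toRepresentation g).prodMap (q.toRepresentation g)) := by
    rw [LinearEquiv.conj_apply]
    ext x
    obtain ⟨⟨y, z⟩, rfl⟩ := e.surjective x
    simp [e, Subrepresentation.toRepresentation]
  change LinearMap.trace ℂ V (V.ρ g) = LinearMap.trace ℂ _ (p.toRepresentation g) +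
    LinearMap.trace ℂ _ (q.toRepresentation g)
  rw [key, LinearMap.trace_conj', LinearMap.trace_prodMap']

/-- Every character is a linear combination of irreducible characters. -/
theorem FDRep.character_mem_span {G : Type} [Group G] [Finite G] {ι : Type}
    (rep : ι → FDRep ℂ G)
    (hcomplete : ∀ V : FDRep ℂ G, Simple V → ∃ i, Nonempty (V ≅ rep i)) (V : FDRep ℂ G) :
    V.character ∈ Submodule.span ℂ (Set.range fun i => (rep i).character) := by
  induction hn : Module.finrank ℂ V using Nat.strong_induction_on generalizing V with
  | _ n ih =>
  by_cases hirr : Representation.IsIrreducible V.ρ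
  · obtain ⟨i, ⟨e⟩⟩ := hcomplete V (V.simple_of_isIrreducible hirr)
    rw [FDRep.char_iso e]
    exact Submodule.subset_span ⟨i, rfl⟩
  rcases subsingleton_or_nontrivial V with hV | hV
  · have : V.character = 0 := by
      ext g
      have h0 : V.ρ g = 0 := LinearMap.ext fun x => Subsingleton.elim _ _
      rw [FDRep.character, h0, map_zero, Pi.zero_apply]
    rw [this]
    exact zero_mem _
  obtain ⟨p, hp0, hp1⟩ : ∃ p : Subrepresentation V.ρ, p ≠ ⊥ ∧ p ≠ ⊤ := by
    by_contra! hp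
    have hne : (⊥ : Subrepresentation V.ρ) ≠ ⊤ := fun h =>
      bot_ne_top (congrArg Subrepresentation.toSubmodule h)
    exact hirr { exists_pair_ne := ⟨⊥, ⊤, hne⟩
                 eq_bot_or_eq_top := fun p => or_iff_not_imp_left.mpr (hp p) }
  have : NeZero (Nat.card G : ℂ) := ⟨Nat.cast_ne_zero.mpr Nat.card_pos.ne'⟩
  obtain ⟨q, hpq⟩ := exists_isCompl p
  have hlt : ∀ p : Subrepresentation V.ρ, p ≠ ⊤ →
      Module.finrank ℂ (FDRep.of p.toRepresentation) < n := fun p hp => by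
    rw [← hn]
    exact Submodule.finrank_lt fun h => hp (Subrepresentation.toSubmodule_injective h)
  rw [V.character_eq_add_of_isCompl p q hpq]
  refine add_mem (ih _ (hlt p hp1) _ rfl) (ih _ (hlt q ?_) _ rfl)
  rintro rfl
  exact hp0 (by simpa using hpq.inf_eq_bot)

/-- The character of `V` is the sum of the irreducible characters, weighted by their
multiplicities in `V`. -/
theorem FDRep.character_eq_sum_multIn {G : Type} [Group G] [Fintype G] {ι : Type} [Fintype ι]
    (rep : ι → FDRep ℂ G) (hsimple : ∀ i, Simple (rep i))
    (hcomplete : ∀ V : FDRep ℂ G, Simple V → ∃ i, Nonempty (V ≅ rep i))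
    (hinj : ∀ i j : ι, Nonempty (rep i ≅ rep j) → i = j) (V : FDRep ℂ G) (g : G) :
    V.character g = ∑ i, (multIn (rep i) V : ℂ) * (rep i).character g := by
  classical
  have := invertibleOfNonzero (Nat.cast_ne_zero.mpr Nat.card_pos.ne' : (Nat.card G : ℂ) ≠ 0)
  obtain ⟨a, ha⟩ := (Submodule.mem_span_range_iff_exists_fun ℂ).mp
    (FDRep.character_mem_span rep hcomplete V)
  have hav : ∀ x, V.character x = ∑ i, a i * (rep i).character x := fun x => by
    rw [← ha]; simp
  suffices h : ∀ j, (multIn (rep j) V : ℂ) = a j by simp_rw [h, hav]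
  intro j
  have horth : ∀ i, (Nat.card G : ℂ)⁻¹ * ∑ x, (rep i).character x * (rep j).character x⁻¹ =
      if i = j then 1 else 0 := fun i => by
    rw [FDRep.char_orthonormal]
    exact if_congr ⟨hinj i j, fun h => h ▸ ⟨Iso.refl _⟩⟩ rfl rfl
  calc (multIn (rep j) V : ℂ)
      = (Nat.card G : ℂ)⁻¹ * ∑ x, V.character x * (rep j).character x⁻¹ :=
        (FDRep.scalar_product_char_eq_finrank_equivariant (rep j) V).symm
    _ = ∑ i, a i * ((Nat.card G : ℂ)⁻¹ *
          ∑ x, (rep i).character x * (rep j).character x⁻¹) := by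
        simp_rw [hav, Finset.sum_mul, Finset.mul_sum]
        rw [Finset.sum_comm]
        exact Finset.sum_congr rfl fun i _ => Finset.sum_congr rfl fun x _ => by ring
    _ = a j := by simp_rw [horth]; simp

/-- The dimension of a simple representation is nonzero. -/
theorem FDRep.finrank_ne_zero_of_simple {G : Type} [Group G] [Fintype G] (V : FDRep ℂ G)
    [hV : Simple V] : (Module.finrank ℂ V : ℂ) ≠ 0 := by
  intro h
  have : Subsingleton V := Module.finrank_zero_iff.mp (Nat.cast_eq_zero.mp h)
  have h1 := V.simple_iff_char_is_norm_one.mp hV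
  have h0 : ∀ g, V.character g = 0 := fun g => by
    have h0 : V.ρ g = 0 := LinearMap.ext fun x => Subsingleton.elim _ _
    rw [FDRep.character, h0, map_zero]
  simp only [h0, zero_mul, Finset.sum_const_zero] at h1
  exact Nat.card_pos.ne' (Nat.cast_eq_zero.mp h1.symm)

/-- Schur's lemma: a linear endomorphism of a simple representation commuting with the action
is a scalar. -/
theorem FDRep.exists_eq_smul_one_of_commute {G : Type} [Group G] (V : FDRep ℂ G)
    [Simple V] (T : V →ₗ[ℂ] V) (hT : ∀ g, Commute T (V.ρ g)) : ∃ a : ℂ, T = a • 1 := by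
  let f : V ⟶ V := FDRep.forget₂HomLinearEquiv V V (Rep.ofHom ⟨T, fun g => (hT g).eq⟩)
  obtain ⟨a, ha⟩ := (finrank_eq_one_iff_of_nonzero' (𝟙 V) (id_nonzero V)).mp
    (finrank_endomorphism_simple_eq_one ℂ V) f
  refine ⟨a, ?_⟩
  have h := congrArg (fun f : V ⟶ V => f.hom.hom.hom) ha
  exact h.symm

/-- The sum of the products of all `s`-tuples from `C` is the `s`-th power of the sum of `C`. -/
theorem Finset.sum_piFinset_prod_ofFn {R M : Type*} [Semiring R] [Monoid M] [DecidableEq M]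
    (φ : M →* R) (C : Finset M) (s : ℕ) :
    ∑ c ∈ Fintype.piFinset (fun _ : Fin s => C), φ (List.ofFn c).prod =
      (∑ c ∈ C, φ c) ^ s := by
  induction s with
  | zero => simp
  | succ s ih =>
    rw [pow_succ', ← ih, Finset.sum_mul_sum, ← Finset.sum_product']
    refine (Finset.sum_bij' (fun x _ => Fin.cons x.1 x.2) (fun c _ => (c 0, Fin.tail c))
      ?_ ?_ ?_ ?_ ?_).symm
    · rintro ⟨a, b⟩ h
      simp only [Finset.mem_product, Fintype.mem_piFinset] at h ⊢
      exact Fin.cases h.1 h.2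
    · intro c h
      simp only [Finset.mem_product, Fintype.mem_piFinset] at h ⊢
      exact ⟨h 0, fun i => h i.succ⟩
    · intros; simp
    · intros; simp
    · intros; simp [List.ofFn_succ]

/-- For a simple representation, the average over `s`-tuples in a conjugacy class of the
normalized character of their product is the `s`-th power of its value on the class. -/
theorem FDRep.sum_piFinset_character {G : Type} [Group G] [Fintype G] [DecidableEq G]
    (V : FDRep ℂ G) [Simple V] (g₀ : G) (C : Finset G) (hC : ∀ h, h ∈ C ↔ IsConj g₀ h) (s : ℕ) :
    ∑ c ∈ Fintype.piFinset (fun _ : Fin s => C),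
        V.character (List.ofFn c).prod / (Module.finrank ℂ V : ℂ) =
      ((C.card : ℂ) * (V.character g₀ / (Module.finrank ℂ V : ℂ))) ^ s := by
  have hd := V.finrank_ne_zero_of_simple
  have hcomm : ∀ g, Commute (∑ c ∈ C, V.ρ c) (V.ρ g) := fun g => by
    rw [Commute, SemiconjBy, Finset.sum_mul, Finset.mul_sum]
    refine Finset.sum_bij' (fun c _ => g⁻¹ * c * g) (fun c _ => g * c * g⁻¹) ?_ ?_ ?_ ?_ ?_
    · intro c h
      rw [hC] at h ⊢
      exact h.trans (isConj_iff.mpr ⟨g⁻¹, by simp⟩)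
    · intro c h
      rw [hC] at h ⊢
      exact h.trans (isConj_iff.mpr ⟨g, rfl⟩)
    · intros; group
    · intros; group
    · intros
      rw [← map_mul, ← map_mul]
      congr 1
      group
  obtain ⟨a, ha⟩ := V.exists_eq_smul_one_of_commute _ hcomm
  have htrace : (C.card : ℂ) * V.character g₀ = a * Module.finrank ℂ V := by
    have h := congrArg (LinearMap.trace ℂ V) ha
    rw [map_sum, map_smul, LinearMap.trace_one, smul_eq_mul] at h
    rw [← h, ← nsmul_eq_mul]
    refine (Finset.sum_eq_card_nsmul fun c hc => ?_).symm
    obtain ⟨x, rfl⟩ := isConj_iff.mp ((hC c).mp hc)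
    exact V.char_conj g₀ x
  rw [← mul_div_assoc, htrace, mul_div_cancel_right₀ _ hd, ← Finset.sum_div]
  have h := congrArg (LinearMap.trace ℂ V) (Finset.sum_piFinset_prod_ofFn V.ρ C s)
  rw [ha, smul_pow, one_pow, map_sum, map_smul, LinearMap.trace_one, smul_eq_mul] at h
  rw [div_eq_iff hd, ← h]
  rfl

/-- The normalized irreducible characters at `g` form a right eigenvector of the tensor product
chain, with eigenvalue the normalized character of `η` at `g`. -/
theorem sum_tensorChain_pow_mul {G : Type} [Group G] [Fintype G]
    {ι : Type} [Fintype ι] [DecidableEq ι] (rep : ι → FDRep ℂ G)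
    (hsimple : ∀ i, Simple (rep i))
    (hcomplete : ∀ V : FDRep ℂ G, Simple V → ∃ i, Nonempty (V ≅ rep i))
    (hinj : ∀ i j : ι, Nonempty (rep i ≅ rep j) → i = j)
    (η : FDRep ℂ G) (g : G) (r : ℕ) (l : ι) :
    ∑ i, ((tensorChain rep η ^ r) l i : ℂ) *
        ((rep i).character g / (Module.finrank ℂ (rep i) : ℂ)) =
      (η.character g / (Module.finrank ℂ η : ℂ)) ^ r *
        ((rep l).character g / (Module.finrank ℂ (rep l) : ℂ)) := by
  have hd : ∀ i, (Module.finrank ℂ (rep i) : ℂ) ≠ 0 := fun i =>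
    (rep i).finrank_ne_zero_of_simple
  have hstep : ∀ l, ∑ i, (tensorChain rep η l i : ℂ) *
      ((rep i).character g / (Module.finrank ℂ (rep i) : ℂ)) =
      (η.character g / (Module.finrank ℂ η : ℂ)) *
        ((rep l).character g / (Module.finrank ℂ (rep l) : ℂ)) := fun l => by
    have h := FDRep.character_eq_sum_multIn rep hsimple hcomplete hinj (rep l ⊗ η) g
    rw [FDRep.char_tensor, Pi.mul_apply] at h
    rw [div_mul_div_comm, mul_comm (η.character g), h, Finset.sum_div]
    refine Finset.sum_congr rfl fun i _ => ?_
    have := hd i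
    simp only [tensorChain]
    push_cast
    rw [div_mul_div_comm, mul_comm (Module.finrank ℂ η : ℂ)]
    rw [mul_right_comm, mul_div_mul_right _ _ this]
  induction r generalizing l with
  | zero => simp [Matrix.one_apply, apply_ite]
  | succ r ih =>
    simp_rw [pow_succ (tensorChain rep η), Matrix.mul_apply, Complex.ofReal_sum,
      Complex.ofReal_mul, Finset.sum_mul]
    rw [Finset.sum_comm]
    simp_rw [mul_assoc, ← Finset.mul_sum, hstep]
    rw [pow_succ', mul_assoc, ← ih, Finset.mul_sum]
    exact Finset.sum_congr rfl fun i _ => by ring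

/-- **Proposition (moments of `f_C` under the tensor product chain).**  Let `G` be a finite
group, `rep` a complete list of pairwise non-isomorphic irreducible complex representations
of `G` (indexed by `ι`), `triv` the index of the trivial representation, and `η` a
finite-dimensional complex representation of `G`.  Let `C` be the conjugacy class of
`g₀ ∈ G` and let `f_C(ρ) = |C|^{1/2}·χ^ρ(C)/d_ρ`.  Then for all `r, s ≥ 0`,
`E_{K^r}[(f_C)^s] = Σ_ρ K^r(𝟙,ρ)·f_C(ρ)^s
   = |C|^{s/2}·|C|^{-s}·Σ_{(c_1,…,c_s)∈C^s} (χ^η(c_1⋯c_s)/d_η)^r`. -/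
theorem moments_fC {G : Type} [Group G] [Fintype G] [DecidableEq G]
    {ι : Type} [Fintype ι] [DecidableEq ι]
    (rep : ι → FDRep ℂ G)
    (hsimple : ∀ i, Simple (rep i))
    (hcomplete : ∀ V : FDRep ℂ G, Simple V → ∃ i, Nonempty (V ≅ rep i))
    (hinj : ∀ i j : ι, Nonempty (rep i ≅ rep j) → i = j)
    (triv : ι) (htriv : ∀ g : G, (rep triv).character g = 1)
    (η : FDRep ℂ G)
    (g₀ : G) (C : Finset G) (hC : ∀ h, h ∈ C ↔ IsConj g₀ h)
    (r s : ℕ) :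
    ∑ ρ, ((tensorChain rep η ^ r) triv ρ : ℂ) *
        ((Real.sqrt C.card : ℂ) * (rep ρ).character g₀ /
          (Module.finrank ℂ (rep ρ) : ℂ)) ^ s =
      ((Real.sqrt C.card ^ s : ℝ) : ℂ) / (C.card : ℂ) ^ s *
        ∑ c ∈ Fintype.piFinset (fun _ : Fin s => C),
          (η.character (List.ofFn c).prod / (Module.finrank ℂ η : ℂ)) ^ r := by
  have hcard : (C.card : ℂ) ≠ 0 :=
    Nat.cast_ne_zero.mpr (Finset.card_ne_zero_of_mem ((hC g₀).mpr (IsConj.refl g₀)))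
  have htriv' : ∀ g, (rep triv).character g / (Module.finrank ℂ (rep triv) : ℂ) = 1 := fun g => by
    rw [← FDRep.char_one, htriv, htriv, div_one]
  have hpow : ∀ i, ((Real.sqrt C.card : ℂ) * (rep i).character g₀ /
      (Module.finrank ℂ (rep i) : ℂ)) ^ s = ((Real.sqrt C.card ^ s : ℝ) : ℂ) / (C.card : ℂ) ^ s *
      ∑ c ∈ Fintype.piFinset (fun _ : Fin s => C),
        (rep i).character (List.ofFn c).prod / (Module.finrank ℂ (rep i) : ℂ) := fun i => by
    rw [(rep i).sum_piFinset_character g₀ C hC, mul_pow, ← mul_assoc,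
      div_mul_cancel₀ _ (pow_ne_zero _ hcard), mul_div_assoc, mul_pow, Complex.ofReal_pow]
  simp_rw [hpow, mul_left_comm _ (_ / _ : ℂ), ← Finset.mul_sum]
  simp_rw [Finset.mul_sum]
  rw [Finset.sum_comm]
  simp_rw [← Finset.mul_sum]
  congr 1
  refine Finset.sum_congr rfl fun c _ => ?_
  rw [sum_tensorChain_pow_mul rep hsimple hcomplete hinj, htriv', mul_one]
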